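/- arXiv:1107.3220 — 2 statements merged into one kernel-verified Lean document; each statement's English description precedes it below -/
import Mathlib

section
/- Let a > 0, A₀ ≥ 0, and let f : [0,∞) → ℝ be continuous with f(t) ≥ 0 for all t, f(0) ≤ A₀, and suppose that at every t with f(t) > 0 the upper forward difference quotient satisfies limsup_{h→0⁺} (f(t+h) − f(t))/h ≤ −a. Then f(t) = 0 for all t ≥ A₀/a. (With a = 4π and f(t) = A(t) the minimal-sphere area function, this is the analytic core of Theorem 3.1: the area A(t) satisfies dA/dt ≤ −4π in the sense of the limsup of forward difference quotients, so nontrivial topology becomes extinct by time T = A₀/(4π).) -/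
/-!
A continuous function whose lower right Dini derivative is at most `c` lies below the line of
slope `c` through its left endpoint. Suppose `c ≤ 0` and the derivative bound is known only where
`f > m`. If `f ≤ m` at some time up to `t`, the line from the last such time `u` gives
`f t ≤ f u ≤ m`; otherwise the bound holds throughout and the line from the initial time applies.
-/

open Filter Set Topology

theorem le_add_mul_of_liminf_slope_right_le {f : ℝ → ℝ} {s t c : ℝ} (hst : s ≤ t)
    (hf : ContinuousOn f (Icc s t))
    (hslope : ∀ x ∈ Ioo s t, ∀ r, c < r → ∃ᶠ z in 𝓝[>] x, slope f x z < r) :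
    f t ≤ f s + c * (t - s) := by
  rcases hst.eq_or_lt with rfl | hlt
  · simp
  have bound_from_interior : ∀ u ∈ Ioo s t, f t ≤ f u + c * (t - u) := fun u hu ↦
    image_le_of_liminf_slope_right_le_deriv_boundary (B := fun x ↦ f u + c * (x - u))
      (B' := fun _ ↦ c) (hf.mono (Icc_subset_Icc_left hu.1.le)) (by simp) (by fun_prop)
      (fun x _ ↦ by
        simpa using
          ((((hasDerivAt_id x).sub_const u).const_mul c).const_add (f u)).hasDerivWithinAt)
      (fun x hx ↦ hslope x ⟨hu.1.trans_le hx.1, hx.2⟩) (right_mem_Icc.2 hu.2.le)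
  rw [← closure_Ioo hlt.ne] at hf
  refine le_on_closure bound_from_interior continuousOn_const (hf.add (by fun_prop)) ?_
  simpa [closure_Ioo hlt.ne] using hst

theorem le_max_add_mul_of_liminf_slope_right_le {f : ℝ → ℝ} {s t c m : ℝ} (hst : s ≤ t)
    (hc : c ≤ 0) (hf : ContinuousOn f (Icc s t))
    (hslope : ∀ x ∈ Ioo s t, m < f x → ∀ r, c < r → ∃ᶠ z in 𝓝[>] x, slope f x z < r) :
    f t ≤ max (f s + c * (t - s)) m := by
  rcases (Icc s t ∩ f ⁻¹' Iic m).eq_empty_or_nonempty with hempty | hne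
  · have above : ∀ x ∈ Icc s t, m < f x := fun x hx ↦
      not_le.1 fun hle ↦ (hempty.subset ⟨hx, hle⟩ : x ∈ (∅ : Set ℝ))
    exact le_max_of_le_left <| le_add_mul_of_liminf_slope_right_le hst hf fun x hx ↦
      hslope x hx (above x ⟨hx.1.le, hx.2.le⟩)
  · obtain ⟨u, ⟨⟨hsu, hut⟩, hum : f u ≤ m⟩, hlast⟩ :=
      (isCompact_Icc.of_isClosed_subset (hf.preimage_isClosed_of_isClosed isClosed_Icc isClosed_Iic)
        inter_subset_left).exists_isGreatest hne
    have above : ∀ x ∈ Ioo u t, m < f x := fun x hx ↦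
      not_le.1 fun hle ↦ hx.1.not_ge (hlast ⟨⟨hsu.trans hx.1.le, hx.2.le⟩, hle⟩)
    have decay : f t ≤ f u + c * (t - u) :=
      le_add_mul_of_liminf_slope_right_le hut (hf.mono (Icc_subset_Icc_left hsu)) fun x hx ↦
        hslope x ⟨hsu.trans_lt hx.1, hx.2⟩ (above x hx)
    have : c * (t - u) ≤ 0 := mul_nonpos_of_nonpos_of_nonneg hc (sub_nonneg.2 hut)
    exact le_max_of_le_right (by linarith)

/- The `limsup` of a real function that is not bounded above is the junk value `sInf ∅ = 0`. -/
theorem isBoundedUnder_le_of_limsup_ne_zero {α : Type*} {l : Filter α} {u : α → ℝ}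
    (h : limsup u l ≠ 0) : l.IsBoundedUnder (· ≤ ·) u := by
  have hne : {b | ∀ᶠ x in l, u x ≤ b}.Nonempty := by
    contrapose! h
    rw [limsup_eq, h, Real.sInf_empty]
  exact hne

theorem limsup_slope_nhdsGT (f : ℝ → ℝ) (t : ℝ) :
    limsup (slope f t) (𝓝[>] t) = limsup (fun h ↦ (f (t + h) - f t) / h) (𝓝[>] 0) := by
  have hmap : map (t + ·) (𝓝[>] 0) = 𝓝[>] t := by simp
  rw [← hmap, ← limsup_comp]
  simp [Function.comp_def, slope_def_field]

theorem eventually_slope_lt_of_limsup_le_of_neg {f : ℝ → ℝ} {t c r : ℝ} (hc : c < 0)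
    (h : limsup (fun h ↦ (f (t + h) - f t) / h) (𝓝[>] 0) ≤ c) (hr : c < r) :
    ∀ᶠ z in 𝓝[>] t, slope f t z < r := by
  rw [← limsup_slope_nhdsGT] at h
  exact eventually_lt_of_limsup_lt (h.trans_lt hr)
    (isBoundedUnder_le_of_limsup_ne_zero (h.trans_lt hc).ne)

theorem extinction_of_area_general {a A₀ : ℝ} (ha : 0 < a) (hA₀ : 0 ≤ A₀) {f : ℝ → ℝ}
    (hcont : ContinuousOn f (Ici 0)) (hinit : f 0 ≤ A₀)
    (hslope : ∀ t, 0 < t → 0 < f t → ∀ r, -a < r → ∃ᶠ z in 𝓝[>] t, slope f t z < r)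
    {t : ℝ} (ht : A₀ / a ≤ t) : f t ≤ 0 := by
  have ht₀ : 0 ≤ t := (div_nonneg hA₀ ha.le).trans ht
  have hAt : A₀ ≤ t * a := (div_le_iff₀ ha).1 ht
  calc f t ≤ max (f 0 + -a * (t - 0)) 0 :=
        le_max_add_mul_of_liminf_slope_right_le ht₀ (neg_nonpos.2 ha.le)
          (hcont.mono Icc_subset_Ici_self) fun x hx ↦ hslope x hx.1
    _ = 0 := max_eq_right (by linarith)

/-- analytic core of Theorem 3.1. If f ≥ 0 on [0,∞) is continuous,
f(0) ≤ A₀, and at every t ≥ 0 with f(t) > 0 the upper forward difference quotient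
(upper right Dini derivative) is ≤ -a, then f vanishes from time A₀/a on. -/
theorem extinction_of_area (a A₀ : ℝ) (ha : 0 < a) (hA₀ : 0 ≤ A₀) (f : ℝ → ℝ)
    (hcont : ContinuousOn f (Set.Ici (0 : ℝ)))
    (hnonneg : ∀ t, 0 ≤ t → 0 ≤ f t)
    (hinit : f 0 ≤ A₀)
    (hdini : ∀ t, 0 ≤ t → 0 < f t →
      Filter.limsup (fun h : ℝ => (f (t + h) - f t) / h) (nhdsWithin 0 (Set.Ioi 0)) ≤ -a) :
    ∀ t, A₀ / a ≤ t → f t = 0 := fun t ht ↦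
  (extinction_of_area_general ha hA₀ hcont hinit (fun x hx hfx _ hr ↦
    (eventually_slope_lt_of_limsup_le_of_neg (neg_lt_zero.2 ha) (hdini x hx.le hfx) hr).frequently)
    ht).antisymm (hnonneg t ((div_nonneg hA₀ ha.le).trans ht))
end

section
/- Let R : ℝ³ → ℝ be continuous, compactly supported, with R ≥ 0 everywhere and R not identically zero. Then the infimum, over all smooth compactly supported u : ℝ³ → ℝ, of ∫_{ℝ³} ( 4‖∇(1+u)‖² + R·(1+u)² ) dx is strictly positive. (This is the flat-background version of the statement that the noncompact Perelman-energy λ_AF(g) = inf_{w→1} ∫_M (4|∇w|² + Rw²) dV is strictly positive on asymptotically flat manifolds with nonnegative scalar curvature unless the scalar curvature vanishes identically.) -/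
open MeasureTheory

open Module
open scoped ENNReal NNReal

/-!
For `0 < g ≤ 1` integrable, `ν = min(R, g) μ` is a nonzero finite measure dominated by both `μ` and
`R μ`. Hölder's inequality for `ν` and the Sobolev inequality for `μ` give
`‖u‖_{L²(ν)} ≤ C ‖∇u‖_{L²(μ)}`. The triangle inequality for `1 = (1 + u) - u` in `L²(ν)` then yields
`ν(E)^{1/2} ≤ ‖1 + u‖_{L²(R μ)} + C ‖∇u‖_{L²(μ)}`, so the two terms of the energy cannot both be
small. The same argument works in `Lᵖ` for `1 ≤ p < dim E`.
-/

lemma exists_isFiniteMeasure_le_le_withDensity {α : Type*} [MeasurableSpace α] {μ : Measure α}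
    [SigmaFinite μ] {ρ : α → ℝ≥0∞} (hρ : AEMeasurable ρ μ) (hρ0 : ¬ρ =ᵐ[μ] 0) :
    ∃ ν : Measure α, IsFiniteMeasure ν ∧ ν ≠ 0 ∧ ν ≤ μ ∧ ν ≤ μ.withDensity ρ := by
  obtain ⟨g, hg_pos, hg_meas, hg_int⟩ := exists_pos_lintegral_lt_of_sigmaFinite μ one_ne_zero
  let σ : α → ℝ≥0∞ := fun x ↦ min (ρ x) (min (g x) 1)
  have hσ_int : ∫⁻ x, σ x ∂μ ≠ ∞ :=
    ((lintegral_mono fun x ↦ (min_le_right _ _).trans (min_le_left _ _)).trans_lt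
      (hg_int.trans ENNReal.one_lt_top)).ne
  have hσ_ne : ¬σ =ᵐ[μ] 0 := by
    refine fun hσ ↦ hρ0 (hσ.mono fun x hx ↦ ?_)
    have hg : 0 < min (g x : ℝ≥0∞) 1 := lt_min (mod_cast hg_pos x) one_pos
    rcases min_choice (ρ x) (min (g x) 1) with h | h
    · exact h.symm.trans hx
    · exact absurd (h.symm.trans hx) hg.ne'
  refine ⟨μ.withDensity σ, isFiniteMeasure_withDensity hσ_int, ?_, ?_, ?_⟩
  · rwa [Ne, withDensity_eq_zero_iff (by fun_prop)]
  · calc μ.withDensity σ ≤ μ.withDensity 1 :=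
          withDensity_mono (ae_of_all _ fun x ↦ (min_le_right _ _).trans (min_le_right _ _))
      _ = μ := withDensity_one
  · exact withDensity_mono (ae_of_all _ fun x ↦ min_le_left _ _)

lemma lintegral_mul_enorm_rpow_add_mul_enorm_rpow {α F G : Type*} [MeasurableSpace α]
    [TopologicalSpace F] [ContinuousENorm F] [TopologicalSpace G] [ContinuousENorm G]
    {μ : Measure α} {f : α → F} {g : α → G}
    (hf : AEStronglyMeasurable f μ) (hg : AEStronglyMeasurable g μ) {ρ : α → ℝ≥0∞}
    (hρ : AEMeasurable ρ μ) (a : ℝ≥0∞) {p : ℝ≥0} (hp : p ≠ 0) :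
    ∫⁻ x, (a * ‖f x‖ₑ ^ (p : ℝ) + ρ x * ‖g x‖ₑ ^ (p : ℝ)) ∂μ =
      a * eLpNorm f p μ ^ (p : ℝ) + eLpNorm g p (μ.withDensity ρ) ^ (p : ℝ) := by
  rw [eLpNorm_nnreal_pow_eq_lintegral hp, eLpNorm_nnreal_pow_eq_lintegral hp,
    lintegral_withDensity_eq_lintegral_mul₀ hρ (by fun_prop),
    lintegral_add_left' (by fun_prop), lintegral_const_mul'' _ (by fun_prop)]
  simp only [Pi.mul_apply]

lemma min_one_mul_rpow_div_le {a d X Y : ℝ≥0∞} {p : ℝ} (hp : 1 ≤ p) (hd : d ≤ X + Y) :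
    min a 1 * (d ^ p / 2 ^ (p - 1)) ≤ a * X ^ p + Y ^ p :=
  calc min a 1 * (d ^ p / 2 ^ (p - 1)) ≤ min a 1 * (X ^ p + Y ^ p) := by
        gcongr
        exact ENNReal.div_le_of_le_mul' ((ENNReal.rpow_le_rpow hd (by positivity)).trans
          (ENNReal.rpow_add_le_mul_rpow_add_rpow X Y hp))
    _ ≤ a * X ^ p + Y ^ p := by
        rw [mul_add]
        gcongr
        · exact min_le_left a 1
        · exact mul_le_of_le_one_left' (min_le_right a 1)

lemma integrable_fderiv_rpow_add_const_add_rpow {E F : Type*} [NormedAddCommGroup E]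
    [NormedSpace ℝ E] [MeasurableSpace E] [OpensMeasurableSpace E] [NormedAddCommGroup F]
    [NormedSpace ℝ F] {μ : Measure E} [IsFiniteMeasureOnCompacts μ] {R : E → ℝ}
    (hR : Integrable R μ) {p : ℝ≥0} (hp : p ≠ 0) (a : ℝ) (b : F) {u : E → F}
    (hu : ContDiff ℝ 1 u) (hsupp : HasCompactSupport u) :
    Integrable (fun x ↦ a * ‖fderiv ℝ u x‖ ^ (p : ℝ) + R x * ‖b + u x‖ ^ (p : ℝ)) μ := by
  have hDu : MemLp (fderiv ℝ u) p μ :=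
    (hu.continuous_fderiv one_ne_zero).memLp_of_hasCompactSupport (hsupp.fderiv ℝ)
  obtain ⟨M, hM⟩ := hu.continuous.bounded_above_of_compact_support hsupp
  have hw : Continuous fun x ↦ ‖b + u x‖ ^ (p : ℝ) :=
    (continuous_const.add hu.continuous).norm.rpow_const fun _ ↦ .inr p.2
  have hw_le (x : E) : ‖‖b + u x‖ ^ (p : ℝ)‖ ≤ (‖b‖ + M) ^ (p : ℝ) := by
    rw [Real.norm_of_nonneg (by positivity)]
    gcongr
    exact norm_add_le_of_le le_rfl (hM x)
  exact ((hDu.integrable_norm_rpow (by simpa) (by simp)).const_mul a).add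
    (hR.mul_bdd hw.aestronglyMeasurable (ae_of_all _ hw_le))

section Energy

variable {E F : Type*} [NormedAddCommGroup E] [NormedSpace ℝ E] [FiniteDimensional ℝ E]
  [MeasurableSpace E] [BorelSpace E] [NormedAddCommGroup F] [NormedSpace ℝ F]
  [FiniteDimensional ℝ F] {μ ν : Measure E} [μ.IsAddHaarMeasure] {p : ℝ≥0}

lemma exists_eLpNorm_le_mul_eLpNorm_fderiv_of_measure_le [IsFiniteMeasure ν] (hν : ν ≤ μ)
    (hp : 1 ≤ p) (hpE : p < finrank ℝ E) :
    ∃ C : ℝ≥0∞, C ≠ ∞ ∧ ∀ u : E → F, ContDiff ℝ 1 u → HasCompactSupport u →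
      eLpNorm u p ν ≤ C * eLpNorm (fderiv ℝ u) p μ := by
  let q : ℝ≥0 := (p⁻¹ - (finrank ℝ E : ℝ≥0)⁻¹)⁻¹
  have hE : 0 < finrank ℝ E := mod_cast (zero_lt_one.trans_le hp).trans hpE
  have hp0 : 0 < p := one_pos.trans_le hp
  have hq : (q : ℝ)⁻¹ = p⁻¹ - (finrank ℝ E : ℝ)⁻¹ := by
    rw [← NNReal.coe_inv, inv_inv, NNReal.coe_sub (by gcongr)]
    simp
  have hpq : p ≤ q :=
    (le_inv_comm₀ hp0 (tsub_pos_of_lt (by gcongr))).2 tsub_le_self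
  have hexp : 0 ≤ 1 / (p : ℝ≥0∞).toReal - 1 / (q : ℝ≥0∞).toReal := by
    have : 0 ≤ (finrank ℝ E : ℝ)⁻¹ := by positivity
    simp only [ENNReal.coe_toReal, one_div, hq, NNReal.coe_inv]
    linarith
  let S : ℝ≥0 := SNormLESNormFDerivOfEqConst F μ p
  let V : ℝ≥0∞ := ν Set.univ ^ (1 / (p : ℝ≥0∞).toReal - 1 / (q : ℝ≥0∞).toReal)
  refine ⟨V * S, by finiteness, fun u hu hsupp ↦ ?_⟩
  calc eLpNorm u p ν ≤ eLpNorm u q ν * V :=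
        eLpNorm_le_eLpNorm_mul_rpow_measure_univ (mod_cast hpq)
          hu.continuous.aestronglyMeasurable
    _ ≤ eLpNorm u q μ * V := by gcongr
    _ ≤ S * eLpNorm (fderiv ℝ u) p μ * V := by
        gcongr; exact eLpNorm_le_eLpNorm_fderiv_of_eq μ hu hsupp hp hE hq
    _ = V * S * eLpNorm (fderiv ℝ u) p μ := by ring

lemma exists_pos_le_eLpNorm_fderiv_add_eLpNorm_const_add_of_measure_le [IsFiniteMeasure ν]
    (hν : ν ≤ μ) (hν0 : ν ≠ 0) (hp : 1 ≤ p) (hpE : p < finrank ℝ E) {b : F} (hb : b ≠ 0) :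
    ∃ c : ℝ≥0∞, 0 < c ∧ ∀ u : E → F, ContDiff ℝ 1 u → HasCompactSupport u →
      c ≤ eLpNorm (fderiv ℝ u) p μ + eLpNorm (fun x ↦ b + u x) p ν := by
  obtain ⟨C, hC, hPoincare⟩ :=
    exists_eLpNorm_le_mul_eLpNorm_fderiv_of_measure_le (F := F) hν hp hpE
  have hp0 : (p : ℝ≥0∞) ≠ 0 := mod_cast (one_pos.trans_le hp).ne'
  have hb_norm : eLpNorm (fun _ : E ↦ b) p ν ≠ 0 := by
    rw [eLpNorm_const b hp0 hν0]
    have : ν Set.univ ≠ 0 := by simpa using hν0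
    simp [hb, this]
  refine ⟨eLpNorm (fun _ : E ↦ b) p ν / (C + 1), ENNReal.div_pos hb_norm (by finiteness),
    fun u hu hsupp ↦ ENNReal.div_le_of_le_mul ?_⟩
  have hcont := hu.continuous
  calc eLpNorm (fun _ ↦ b) p ν = eLpNorm ((fun x ↦ b + u x) - u) p ν := by
        congr 1; ext x; simp
    _ ≤ eLpNorm (fun x ↦ b + u x) p ν + eLpNorm u p ν :=
        eLpNorm_sub_le (by fun_prop) (by fun_prop) (mod_cast hp)
    _ ≤ eLpNorm (fun x ↦ b + u x) p ν + C * eLpNorm (fderiv ℝ u) p μ := by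
        gcongr; exact hPoincare u hu hsupp
    _ ≤ (C + 1) * eLpNorm (fun x ↦ b + u x) p ν + (C + 1) * eLpNorm (fderiv ℝ u) p μ := by
        gcongr
        · exact le_mul_of_one_le_left' le_add_self
        · exact le_self_add
    _ = (eLpNorm (fderiv ℝ u) p μ + eLpNorm (fun x ↦ b + u x) p ν) * (C + 1) := by ring

lemma exists_pos_le_eLpNorm_fderiv_add_eLpNorm_const_add_withDensity {ρ : E → ℝ≥0∞}
    (hρ : AEMeasurable ρ μ) (hρ0 : ¬ρ =ᵐ[μ] 0) (hp : 1 ≤ p) (hpE : p < finrank ℝ E)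
    {b : F} (hb : b ≠ 0) :
    ∃ c : ℝ≥0∞, 0 < c ∧ ∀ u : E → F, ContDiff ℝ 1 u → HasCompactSupport u →
      c ≤ eLpNorm (fderiv ℝ u) p μ + eLpNorm (fun x ↦ b + u x) p (μ.withDensity ρ) := by
  obtain ⟨ν, _, hν0, hνμ, hνρ⟩ := exists_isFiniteMeasure_le_le_withDensity hρ hρ0
  obtain ⟨c, hc, h⟩ :=
    exists_pos_le_eLpNorm_fderiv_add_eLpNorm_const_add_of_measure_le hνμ hν0 hp hpE hb
  exact ⟨c, hc, fun u hu hsupp ↦ (h u hu hsupp).trans (by gcongr)⟩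

lemma exists_pos_le_lintegral_fderiv_rpow_add_const_add_rpow {ρ : E → ℝ≥0∞} (hρ : AEMeasurable ρ μ)
    (hρ0 : ¬ρ =ᵐ[μ] 0) (hp : 1 ≤ p) (hpE : p < finrank ℝ E) {a : ℝ≥0∞} (ha : a ≠ 0)
    {b : F} (hb : b ≠ 0) :
    ∃ c : ℝ≥0, 0 < c ∧ ∀ u : E → F, ContDiff ℝ 1 u → HasCompactSupport u →
      c ≤ ∫⁻ x, (a * ‖fderiv ℝ u x‖ₑ ^ (p : ℝ) + ρ x * ‖b + u x‖ₑ ^ (p : ℝ)) ∂μ := by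
  have hp0 : p ≠ 0 := (one_pos.trans_le hp).ne'
  obtain ⟨d, hd, hle⟩ :=
    exists_pos_le_eLpNorm_fderiv_add_eLpNorm_const_add_withDensity hρ hρ0 hp hpE hb
  have hc : 0 < min a 1 * (d ^ (p : ℝ) / 2 ^ ((p : ℝ) - 1)) :=
    ENNReal.mul_pos (by simp [ha]) (ENNReal.div_pos (by simp [hd.ne']) (by finiteness)).ne'
  obtain ⟨c, hc_pos, hc_lt⟩ := ENNReal.lt_iff_exists_nnreal_btwn.1 hc
  refine ⟨c, mod_cast hc_pos, fun u hu hsupp ↦ hc_lt.le.trans ?_⟩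
  have hu_cont := hu.continuous
  rw [lintegral_mul_enorm_rpow_add_mul_enorm_rpow
    (hu.continuous_fderiv one_ne_zero).aestronglyMeasurable (by fun_prop) hρ a hp0]
  exact min_one_mul_rpow_div_le hp (hle u hu hsupp)

lemma exists_pos_le_integral_fderiv_rpow_add_const_add_rpow {R : E → ℝ} (hR : Integrable R μ)
    (hR_nonneg : 0 ≤ᵐ[μ] R) (hR0 : ¬R =ᵐ[μ] 0) (hp : 1 ≤ p) (hpE : p < finrank ℝ E)
    {a : ℝ} (ha : 0 < a) {b : F} (hb : b ≠ 0) :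
    ∃ c : ℝ, 0 < c ∧ ∀ u : E → F, ContDiff ℝ 1 u → HasCompactSupport u →
      c ≤ ∫ x, (a * ‖fderiv ℝ u x‖ ^ (p : ℝ) + R x * ‖b + u x‖ ^ (p : ℝ)) ∂μ := by
  have hp0 : p ≠ 0 := (one_pos.trans_le hp).ne'
  have hρ0 : ¬(fun x ↦ ENNReal.ofReal (R x)) =ᵐ[μ] 0 := fun h ↦ hR0 <| by
    filter_upwards [h, hR_nonneg] with x hx hx_nonneg
    exact le_antisymm (ENNReal.ofReal_eq_zero.1 hx) hx_nonneg
  obtain ⟨c, hc, hle⟩ := exists_pos_le_lintegral_fderiv_rpow_add_const_add_rpow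
    hR.aemeasurable.ennreal_ofReal hρ0 hp hpE (a := .ofReal a) (by simpa) hb
  refine ⟨c, mod_cast hc, fun u hu hsupp ↦ ?_⟩
  have h_nonneg : 0 ≤ᵐ[μ] fun x ↦ a * ‖fderiv ℝ u x‖ ^ (p : ℝ) + R x * ‖b + u x‖ ^ (p : ℝ) := by
    filter_upwards [hR_nonneg] with x (hx : 0 ≤ R x)
    positivity
  rw [← ENNReal.ofReal_le_ofReal_iff (integral_nonneg_of_ae h_nonneg), ENNReal.ofReal_coe_nnreal,
    ofReal_integral_eq_lintegral_ofReal
      (integrable_fderiv_rpow_add_const_add_rpow hR hp0 a b hu hsupp) h_nonneg]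
  refine (hle u hu hsupp).trans_eq (lintegral_congr_ae ?_)
  filter_upwards [hR_nonneg] with x (hx : 0 ≤ R x)
  rw [ENNReal.ofReal_add (by positivity) (by positivity), ENNReal.ofReal_mul ha.le,
    ENNReal.ofReal_mul hx, ← ENNReal.ofReal_rpow_of_nonneg (by positivity) (by positivity),
    ← ENNReal.ofReal_rpow_of_nonneg (by positivity) (by positivity), ofReal_norm, ofReal_norm]

end Energy

theorem lambdaAF_positive_general {E : Type*} [NormedAddCommGroup E] [InnerProductSpace ℝ E]
    [FiniteDimensional ℝ E] [MeasurableSpace E] [BorelSpace E] {μ : Measure E}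
    [μ.IsAddHaarMeasure] {n : WithTop ℕ∞} (hE : 2 < finrank ℝ E) (hn : 1 ≤ n) {R : E → ℝ}
    (hR : Integrable R μ) (hR_nonneg : 0 ≤ᵐ[μ] R) (hR0 : ¬R =ᵐ[μ] 0) :
    0 < sInf { I : ℝ | ∃ u : E → ℝ, ContDiff ℝ n u ∧ HasCompactSupport u ∧
      I = ∫ x, (4 * ‖gradient (fun y ↦ 1 + u y) x‖ ^ 2 + R x * (1 + u x) ^ 2) ∂μ } := by
  obtain ⟨c, hc, hle⟩ := exists_pos_le_integral_fderiv_rpow_add_const_add_rpow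
    hR hR_nonneg hR0 (p := 2) one_le_two (mod_cast hE)
    (four_pos (α := ℝ)) (one_ne_zero (α := ℝ))
  refine hc.trans_le (le_csInf ⟨_, 0, contDiff_const, HasCompactSupport.zero, rfl⟩ ?_)
  rintro _ ⟨u, hu, hsupp, rfl⟩
  simpa [gradient, fderiv_const_add] using hle u (hu.of_le hn) hsupp

/-- flat-background positivity of the noncompact Perelman-energy λ_AF:
if R ≥ 0 is continuous, compactly supported, and not identically zero, then
inf over smooth compactly supported u of ∫ (4‖∇(1+u)‖² + R(1+u)²) is strictly positive. -/
theorem lambdaAF_positive (R : EuclideanSpace ℝ (Fin 3) → ℝ)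
    (hRcont : Continuous R) (hRsupp : HasCompactSupport R)
    (hRnonneg : ∀ x, 0 ≤ R x) (hRne : R ≠ 0) :
    0 < sInf { I : ℝ | ∃ u : EuclideanSpace ℝ (Fin 3) → ℝ,
      ContDiff ℝ (⊤ : ℕ∞) u ∧ HasCompactSupport u ∧
      I = ∫ x, (4 * ‖gradient (fun y => 1 + u y) x‖ ^ 2
                + R x * (1 + u x) ^ 2) } :=
  lambdaAF_positive_general (by simp) (mod_cast le_top)
    (hRcont.integrable_of_hasCompactSupport hRsupp) (ae_of_all _ hRnonneg)
    (mt (hRcont.ae_eq_iff_eq volume continuous_const).1 hRne)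
end
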